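/- Let ℰ = (E, ≤, ⊕) be an event structure with E finite and nonempty. Then there exists an occurrence net, namely the constructed net η[ℰ] = (B, E, G), such that ξ[η[ℰ]] = ℰ, i.e. the events of η[ℰ] are exactly those of ℰ, the relation G* restricted to E × E equals ≤, and the conflict relation of η[ℰ] restricted to E × E equals ⊕. -/

import Mathlib

open Relation Sum

/-- The preset `•x` of a node of a net with flow relation `flow`. -/
def preset {C E : Type*} (flow : (C ⊕ E) → (C ⊕ E) → Prop) (x : C ⊕ E) : Set (C ⊕ E) :=
  {y | flow y x}

/-- The postset `x•` of a node of a net with flow relation `flow`. -/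
def postset {C E : Type*} (flow : (C ⊕ E) → (C ⊕ E) → Prop) (x : C ⊕ E) : Set (C ⊕ E) :=
  {y | flow x y}

/-- Causal relation `x ⇝ y` iff `(x,y) ∈ G⁺`. -/
def Causal {C E : Type*} (flow : (C ⊕ E) → (C ⊕ E) → Prop) (x y : C ⊕ E) : Prop :=
  TransGen flow x y

/-- Conflict `x # y` : two distinct events with a common pre-node reach `x` and `y`. -/
def InConflict {C E : Type*} (flow : (C ⊕ E) → (C ⊕ E) → Prop) (x y : C ⊕ E) : Prop :=
  ∃ t₁ t₂ : E, t₁ ≠ t₂ ∧ (preset flow (inr t₁) ∩ preset flow (inr t₂)).Nonempty ∧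
    ReflTransGen flow (inr t₁) x ∧ ReflTransGen flow (inr t₂) y

/-- Concurrency `x ∥ y` : neither causal (either way) nor conflict. -/
def Concurrent {C E : Type*} (flow : (C ⊕ E) → (C ⊕ E) → Prop) (x y : C ⊕ E) : Prop :=
  ¬ Causal flow x y ∧ ¬ Causal flow y x ∧ ¬ InConflict flow x y

/-- The flow relation only connects conditions to events and events to conditions. -/
def IsNet {C E : Type*} (flow : (C ⊕ E) → (C ⊕ E) → Prop) : Prop :=
  ∀ x y, flow x y → (∃ (b : C) (e : E), x = inl b ∧ y = inr e) ∨
    ∃ (e : E) (b : C), x = inr e ∧ y = inl b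

/-- Occurrence net: every condition has at most one pre-event, the net is acyclic,
every node has finitely many causal predecessors, no event is in self-conflict. -/
def IsOccurrenceNet {C E : Type*} (flow : (C ⊕ E) → (C ⊕ E) → Prop) : Prop :=
  IsNet flow ∧
  (∀ b : C, (preset flow (inl b)).Subsingleton) ∧
  Irreflexive (Causal flow) ∧
  (∀ x : C ⊕ E, {y | Causal flow y x}.Finite) ∧
  ∀ e : E, ¬ InConflict flow (inr e) (inr e)

/-- An event structure `(E, ≤, ⊕)`: `≤` is a partial order, `⊕` is symmetric and
irreflexive, and conflict heredity holds. -/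
def IsEventStructure {E : Type*} (le conf : E → E → Prop) : Prop :=
  IsPartialOrder E le ∧ Symmetric conf ∧ Irreflexive conf ∧
  ∀ e₁ e₂ e₃ : E, le e₂ e₁ → conf e₂ e₃ → conf e₁ e₃

/-- `CE` : the subsets of `E` whose distinct elements are pairwise in conflict. -/
def CESet {E : Type*} (conf : E → E → Prop) : Set (Set E) :=
  {x | ∀ e₁ ∈ x, ∀ e₂ ∈ x, e₁ ≠ e₂ → conf e₁ e₂}

/-- The conditions of `η[ℰ]` : pairs `⟨e,x⟩` with `e ∈ E`, `x ∈ CE`,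
`∀ e' ∈ x, e ≤ e' ∧ e ≠ e'`, encoded as `(some e, x)`, and pairs `⟨0,x⟩` with
`x ∈ CE`, `x ≠ ∅`, encoded as `(none, x)`. -/
def EtaCond {E : Type*} (le conf : E → E → Prop) : Set (Option E × Set E) :=
  {p | p.2 ∈ CESet conf ∧
    ((∃ e : E, p.1 = some e ∧ ∀ e' ∈ p.2, le e e' ∧ e ≠ e') ∨
     (p.1 = none ∧ p.2.Nonempty))}

/-- The flow relation of `η[ℰ]` : a condition `⟨e,x⟩` (or `⟨0,x⟩`) flows to each
event in `x`, and an event `e` flows to each condition `⟨e,x⟩`. -/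
def EtaFlow {E : Type*} (le conf : E → E → Prop) :
    (↥(EtaCond le conf) ⊕ E) → (↥(EtaCond le conf) ⊕ E) → Prop :=
  fun x y =>
    match x, y with
    | inl b, inr e' => e' ∈ (b : Option E × Set E).2
    | inr e, inl b => (b : Option E × Set E).1 = some e
    | _, _ => False

/-- Invariant describing strict causality in `η[ℰ]`. -/
def EtaStrict {E : Type*} (le conf : E → E → Prop) :
    (↥(EtaCond le conf) ⊕ E) → (↥(EtaCond le conf) ⊕ E) → Prop :=
  fun x y =>
    match x, y with
    | inl b, inr e' => ∃ f ∈ (b : Option E × Set E).2, le f e'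
    | inr e, inl b => ∃ f, (b : Option E × Set E).1 = some f ∧ le e f
    | inr e, inr e' => le e e' ∧ e ≠ e'
    | inl b, inl b' => ∃ f ∈ (b : Option E × Set E).2,
        ∃ g, (b' : Option E × Set E).1 = some g ∧ le f g

theorem etaCond_lt {E : Type*} {le conf : E → E → Prop} (b : ↥(EtaCond le conf)) {f e : E}
    (h : (b : Option E × Set E).1 = some f) (he : e ∈ (b : Option E × Set E).2) :
    le f e ∧ f ≠ e := by
  obtain ⟨-, ⟨g, hg, hall⟩ | ⟨hn, -⟩⟩ := b.2
  · rw [h] at hg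
    cases hg
    exact hall e he
  · rw [h] at hn
    cases hn

theorem etaStrict_of_transGen {E : Type*} {le conf : E → E → Prop} (hpo : IsPartialOrder E le)
    {x y : ↥(EtaCond le conf) ⊕ E} (h : TransGen (EtaFlow le conf) x y) :
    EtaStrict le conf x y := by
  have hr : ∀ a, le a a := hpo.refl
  have ht : ∀ a b c, le a b → le b c → le a c := hpo.trans
  have ha : ∀ a b, le a b → le b a → a = b := hpo.antisymm
  induction h with
  | @single y h =>
    rcases x with b | e <;> rcases y with b' | e'
    · exact h.elim
    · exact ⟨e', h, hr _⟩
    · exact ⟨e, h, hr _⟩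
    · exact h.elim
  | @tail y z _ h ih =>
    rcases y with b | e <;> rcases z with b' | e'
    · exact h.elim
    · have h : e' ∈ (b : Option E × Set E).2 := h
      rcases x with c | d
      · obtain ⟨f, hf, g, hg, hfg⟩ := ih
        exact ⟨f, hf, ht _ _ _ hfg (etaCond_lt b hg h).1⟩
      · obtain ⟨f, hf, hdf⟩ := ih
        obtain ⟨h1, h2⟩ := etaCond_lt b hf h
        refine ⟨ht _ _ _ hdf h1, ?_⟩
        rintro rfl
        exact h2 (ha _ _ h1 hdf)
    · rcases x with c | d
      · obtain ⟨f, hf, hfe⟩ := ih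
        exact ⟨f, hf, e, h, hfe⟩
      · exact ⟨e, h, ih.1⟩
    · exact h.elim

/-- For a finite nonempty event structure `ℰ = (E, ≤, ⊕)`, the
constructed net `η[ℰ]` (whose events are exactly those of `ℰ`) is an occurrence
net with `ξ[η[ℰ]] = ℰ` : causality restricted to events equals `≤` and conflict
restricted to events equals `⊕`. -/
theorem stmt13 {E : Type*} [Finite E] [Nonempty E] (le conf : E → E → Prop)
    (hES : IsEventStructure le conf) :
    IsOccurrenceNet (EtaFlow le conf) ∧
    (∀ e e' : E, ReflTransGen (EtaFlow le conf) (inr e) (inr e') ↔ le e e') ∧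
    (∀ e e' : E, InConflict (EtaFlow le conf) (inr e) (inr e') ↔ conf e e') := by
  obtain ⟨hpo, hsym, hirr, hher⟩ := hES
  have hr : ∀ a, le a a := hpo.refl
  have ha : ∀ a b, le a b → le b a → a = b := hpo.antisymm
  have hle : ∀ e e' : E, ReflTransGen (EtaFlow le conf) (inr e) (inr e') ↔ le e e' := by
    intro e e'
    constructor
    · intro h
      rcases reflTransGen_iff_eq_or_transGen.1 h with h | h
      · cases h
        exact hr _
      · exact (etaStrict_of_transGen hpo h).1
    · intro h
      by_cases hne : e = e'
      · rw [hne]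
      · have hb : ((some e, {e'}) : Option E × Set E) ∈ EtaCond le conf := by
          refine ⟨?_, Or.inl ⟨e, rfl, ?_⟩⟩
          · rintro a rfl b rfl hab
            exact (hab rfl).elim
          · rintro a rfl
            exact ⟨h, hne⟩
        have h1 : EtaFlow le conf (inr e) (inl ⟨_, hb⟩) := rfl
        have h2 : EtaFlow le conf (inl ⟨_, hb⟩) (inr e') := rfl
        exact (ReflTransGen.single h1).tail h2
  have hconf : ∀ e e' : E, InConflict (EtaFlow le conf) (inr e) (inr e') ↔ conf e e' := by
    intro e e'
    constructor
    · rintro ⟨t₁, t₂, hne, ⟨y, hy1, hy2⟩, h1, h2⟩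
      rw [hle] at h1 h2
      rcases y with b | d
      · have h := b.2.1 t₁ hy1 t₂ hy2 hne
        exact hsym (hher _ _ _ h2 (hsym (hher _ _ _ h1 h)))
      · exact False.elim hy1
    · intro h
      have hne : e ≠ e' := by
        rintro rfl
        exact hirr _ h
      have hb : ((none, {e, e'}) : Option E × Set E) ∈ EtaCond le conf := by
        refine ⟨?_, Or.inr ⟨rfl, ⟨e, Or.inl rfl⟩⟩⟩
        rintro a (rfl | rfl) b (rfl | rfl) hab
        · exact (hab rfl).elim
        · exact h
        · exact hsym h
        · exact (hab rfl).elim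
      exact ⟨e, e', hne, ⟨inl ⟨_, hb⟩, Or.inl rfl, Or.inr rfl⟩, .refl, .refl⟩
  refine ⟨⟨?_, ?_, ?_, fun x => Set.toFinite _, fun e h => hirr e ((hconf e e).1 h)⟩, hle, hconf⟩
  · rintro (b | e) (b' | e') h
    · exact h.elim
    · exact Or.inl ⟨b, e', rfl, rfl⟩
    · exact Or.inr ⟨e, b', rfl, rfl⟩
    · exact h.elim
  · rintro b (c | e) h1 (c' | e') h2
    · exact False.elim h1
    · exact False.elim h1
    · exact False.elim h2
    · have h1 : (b : Option E × Set E).1 = some e := h1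
      have h2 : (b : Option E × Set E).1 = some e' := h2
      rw [h1] at h2
      cases h2
      rfl
  · rintro (b | e) h
    · obtain ⟨f, hf, g, hg, hfg⟩ := etaStrict_of_transGen hpo h
      obtain ⟨h1, h2⟩ := etaCond_lt b hg hf
      exact h2 (ha _ _ h1 hfg)
    · exact (etaStrict_of_transGen hpo h).2 rfl
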